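/- For ℕ-exponent-strings p₁ and p₂, there exists a minimum-cost exp-edit sequence from p₁ to p₂ all of whose intermediate terms are ℕ-exponent-strings (i.e., have integer exponents), with total cost equal to dist(p₁, p₂). -/

import Mathlib

/-!
The distance between two integer exponent-strings is computed by the classical alignment
recursion `align` on the words they encode, and an optimal alignment is itself an edit sequence
with integer exponents (`sEditCost_align`, `step_ofWord`). What has to be shown is that exponents
which are not integers cannot lower the cost.

Fix an exp-edit sequence of cost `c` and a natural number `N`. Replace every intermediate string
`∏ aᵢ^{sᵢ}` by the word `blow N` obtained by repeating `aᵢ` exactly `⌊N sᵢ⌋` times. Because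
merging two runs of the same letter changes this word by at most one letter, every step of the
sequence becomes a passage between words whose alignment cost is at most `N` times the cost of the
step, plus a constant that does not depend on `N` (`Step.dominates`). The two end strings have
integer exponents, so their words `u`, `v` are turned into `rep N u`, `rep N v`, in which every
letter is repeated `N` times. Hence `align (rep N u) (rep N v) ≤ N c + K` for all `N`.

On the other hand `N * align u v ≤ align (rep N u) (rep N v)` (`le_align_rep`): the values of
`align` on the suffixes of `u` and `v` form a function on a grid, and its piecewise linear
interpolation along the diagonals `x - y ∈ ℤ` is still a feasible potential for the refined grid.
Dividing by `N` and letting `N → ∞` gives `align u v ≤ c`.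
-/

namespace ExpStr

variable {α S : Type*}

/-- Concatenation of exponent-string representations, merging the boundary
terms when the base characters coincide. -/
def eCat [DecidableEq α] (op : S → S → S) (p q : List (α × S)) : List (α × S) :=
  match p.getLast?, q with
  | some (a, s), (b, t) :: q' =>
      if a = b then p.dropLast ++ (a, op s t) :: q' else p ++ q
  | _, _ => p ++ q

/-- The defining property of an `S`-exponent-string:
consecutive base characters differ. -/
def IsExp (l : List (α × S)) : Prop := l.Chain' (fun x y => x.1 ≠ y.1)

/-- The exponent-string corresponding to a representation. -/
def eRep [DecidableEq α] (op : S → S → S) : List (α × S) → List (α × S)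
  | [] => []
  | x :: xs => eCat op [x] (eRep op xs)

end ExpStr

noncomputable section
namespace ExpStr
open MeasureTheory

variable {α : Type*}

/-- Length of an `ℝ⁺`-exponent-string: the sum of its exponents. -/
def eLen (l : List (α × ℝ)) : ℝ := (l.map Prod.snd).sum

/-- `ℝ⁺`-exponent-strings: consecutive base characters differ and all
exponents are positive reals. -/
def RES (l : List (α × ℝ)) : Prop := IsExp l ∧ ∀ x ∈ l, 0 < x.2

/-- Concatenation of `ℝ⁺`-exponent-strings (exponents added at the boundary). -/
def rcat [DecidableEq α] (p q : List (α × ℝ)) : List (α × ℝ) :=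
  eCat (· + ·) p q

/-- The `ℕ`-exponent-string (run-length encoding) corresponding to a word. -/
def ofWord [DecidableEq α] (w : List α) : List (α × ℝ) :=
  eRep (· + ·) (w.map fun a => (a, (1 : ℝ)))

/-- Multiply every exponent by `k`. -/
def scaleE (k : ℝ) (l : List (α × ℝ)) : List (α × ℝ) :=
  l.map fun x => (x.1, k * x.2)

/-- The base character of the position `x` in an `ℝ⁺`-exponent-string. -/
def charAt [Inhabited α] : List (α × ℝ) → ℝ → α
  | [], _ => default
  | (a, s) :: t, x => if x < s then a else charAt t (x - s)

/-- A single exp-edit operation applied to an infix, with its cost: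
insertion `λ → a^q`, deletion `a^q → λ`, or substitution `a^q → b^q`. -/
def Step [DecidableEq α] (wdel wins : α → ℝ) (wsub : α → α → ℝ)
    (u v : List (α × ℝ)) (c : ℝ) : Prop :=
  ∃ p₁ p₂ : List (α × ℝ), RES p₁ ∧ RES p₂ ∧
    ((∃ a q, 0 < q ∧ u = rcat p₁ p₂ ∧ v = rcat p₁ (rcat [(a, q)] p₂) ∧
        c = q * wins a) ∨
     (∃ a q, 0 < q ∧ u = rcat p₁ (rcat [(a, q)] p₂) ∧ v = rcat p₁ p₂ ∧
        c = q * wdel a) ∨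
     (∃ a b q, 0 < q ∧ u = rcat p₁ (rcat [(a, q)] p₂) ∧
        v = rcat p₁ (rcat [(b, q)] p₂) ∧ c = q * wsub a b))

/-- `EditCost wdel wins wsub u v c` holds iff there is a finite exp-edit
sequence from `u` to `v` of total cost `c`. -/
inductive EditCost [DecidableEq α] (wdel wins : α → ℝ) (wsub : α → α → ℝ)
    (u : List (α × ℝ)) : List (α × ℝ) → ℝ → Prop
  | refl : EditCost wdel wins wsub u u 0
  | step {p q : List (α × ℝ)} {c c' : ℝ} :
      EditCost wdel wins wsub u p c → Step wdel wins wsub p q c' →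
      EditCost wdel wins wsub u q (c + c')

/-- Exp-edit distance: the infimum cost of exp-edit sequences. -/
def eDist [DecidableEq α] (wdel wins : α → ℝ) (wsub : α → α → ℝ)
    (u v : List (α × ℝ)) : ℝ :=
  sInf {c | EditCost wdel wins wsub u v c}

/-- Exp-edit sequences all of whose intermediate terms satisfy `P`. -/
inductive EditCostIn [DecidableEq α] (P : List (α × ℝ) → Prop)
    (wdel wins : α → ℝ) (wsub : α → α → ℝ)
    (u : List (α × ℝ)) : List (α × ℝ) → ℝ → Prop
  | refl : EditCostIn P wdel wins wsub u u 0
  | step {p q : List (α × ℝ)} {c c' : ℝ} :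
      EditCostIn P wdel wins wsub u p c → Step wdel wins wsub p q c' → P q →
      EditCostIn P wdel wins wsub u q (c + c')

/-- All exponents are positive integers. -/
def IntExp (l : List (α × ℝ)) : Prop := ∀ x ∈ l, ∃ n : ℕ, x.2 = n

/-- All exponents are (positive) rationals. -/
def RatExp (l : List (α × ℝ)) : Prop := ∀ x ∈ l, ∃ r : ℚ, x.2 = r

/-- A single classical string edit operation with its cost. -/
def SStep (wdel wins : α → ℝ) (wsub : α → α → ℝ) (u v : List α) (c : ℝ) : Prop :=
  ∃ p₁ p₂ : List α,
    ((∃ a, u = p₁ ++ p₂ ∧ v = p₁ ++ a :: p₂ ∧ c = wins a) ∨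
     (∃ a, u = p₁ ++ a :: p₂ ∧ v = p₁ ++ p₂ ∧ c = wdel a) ∨
     (∃ a b, u = p₁ ++ a :: p₂ ∧ v = p₁ ++ b :: p₂ ∧ c = wsub a b))

/-- Total costs of classical string edit sequences. -/
inductive SEditCost (wdel wins : α → ℝ) (wsub : α → α → ℝ) (u : List α) :
    List α → ℝ → Prop
  | refl : SEditCost wdel wins wsub u u 0
  | step {p q : List α} {c c' : ℝ} :
      SEditCost wdel wins wsub u p c → SStep wdel wins wsub p q c' →
      SEditCost wdel wins wsub u q (c + c')

/-- Classical string edit distance. -/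
def sDist (wdel wins : α → ℝ) (wsub : α → α → ℝ) (u v : List α) : ℝ :=
  sInf {c | SEditCost wdel wins wsub u v c}

/-- X-projection of a diagonal segment `(x₀, y₀, t)`. -/
def mSegX (m : ℝ × ℝ × ℝ) : Set ℝ := Set.Ico m.1 (m.1 + m.2.2)

/-- Y-projection of a diagonal segment `(x₀, y₀, t)`. -/
def mSegY (m : ℝ × ℝ × ℝ) : Set ℝ := Set.Ico m.2.1 (m.2.1 + m.2.2)

/-- X-projection of a matching. -/
def mEX (M : List (ℝ × ℝ × ℝ)) : Set ℝ := ⋃ m ∈ M, mSegX m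

/-- Y-projection of a matching. -/
def mEY (M : List (ℝ × ℝ × ℝ)) : Set ℝ := ⋃ m ∈ M, mSegY m

/-- An exp-matching: a finite family of diagonal segments, each given as
`(x₀, y₀, t)` (start point and length parameter), lying in `[0,L₁)×[0,L₂)`,
with pairwise disjoint axis projections, and monotone. -/
def IsMatching (L₁ L₂ : ℝ) (M : List (ℝ × ℝ × ℝ)) : Prop :=
  (∀ m ∈ M, 0 < m.2.2 ∧ 0 ≤ m.1 ∧ 0 ≤ m.2.1 ∧
      m.1 + m.2.2 ≤ L₁ ∧ m.2.1 + m.2.2 ≤ L₂) ∧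
  M.Pairwise (fun m m' =>
      Disjoint (mSegX m) (mSegX m') ∧ Disjoint (mSegY m) (mSegY m')) ∧
  (∀ m ∈ M, ∀ m' ∈ M, ∀ s s' : ℝ, 0 ≤ s → s < m.2.2 → 0 ≤ s' → s' < m'.2.2 →
      m.1 + s < m'.1 + s' → m.2.1 + s ≤ m'.2.1 + s')

/-- Cost of an exp-matching: deletion and insertion integrals over the
unmatched positions plus the substitution (arc-length) integral over the
segments (the factor `1/√2` cancels the speed `√2` of the parametrization). -/
def mCost [Inhabited α] (wdel wins : α → ℝ) (wsub : α → α → ℝ)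
    (p₁ p₂ : List (α × ℝ)) (M : List (ℝ × ℝ × ℝ)) : ℝ :=
  (∫ x in Set.Ico 0 (eLen p₁) \ mEX M, wdel (charAt p₁ x)) +
  (∫ y in Set.Ico 0 (eLen p₂) \ mEY M, wins (charAt p₂ y)) +
  (M.map fun m => ∫ s in (0 : ℝ)..m.2.2,
      wsub (charAt p₁ (m.1 + s)) (charAt p₂ (m.2.1 + s))).sum

end ExpStr
end

namespace ExpStr

variable {α : Type*}

/-! ### The alignment cost of words -/

/-- The cost of an optimal alignment of two words, by the Wagner–Fischer recursion on their first
letters. -/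
noncomputable def align (wdel wins : α → ℝ) (wsub : α → α → ℝ) : List α → List α → ℝ
  | [], [] => 0
  | [], y :: ys => wins y + align wdel wins wsub [] ys
  | x :: xs, [] => wdel x + align wdel wins wsub xs []
  | x :: xs, y :: ys =>
      min (wdel x + align wdel wins wsub xs (y :: ys))
        (min (wins y + align wdel wins wsub (x :: xs) ys)
          (wsub x y + align wdel wins wsub xs ys))
termination_by u v => u.length + v.length

/-- `u` costs at most `c` more than `v` to align with any target. By the triangle inequalities for
the weights, an edit of cost `c` leading from `u` to `v` gives such a bound; unlike edit sequences,
these bounds need no bookkeeping of intermediate words. -/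
def Dominates (wdel wins : α → ℝ) (wsub : α → α → ℝ) (u v : List α) (c : ℝ) : Prop :=
  ∀ w, align wdel wins wsub u w ≤ c + align wdel wins wsub v w

section Align

variable {wdel wins : α → ℝ} {wsub : α → α → ℝ}

lemma align_del_le (a : α) (u v : List α) :
    align wdel wins wsub (a :: u) v ≤ wdel a + align wdel wins wsub u v := by
  cases v with
  | nil => rw [align]
  | cons b v => rw [align]; exact min_le_left _ _

lemma align_ins_le (b : α) (u v : List α) :
    align wdel wins wsub u (b :: v) ≤ wins b + align wdel wins wsub u v := by
  cases u with
  | nil => rw [align]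
  | cons a u => rw [align]; exact (min_le_right _ _).trans (min_le_left _ _)

lemma align_sub_le (a b : α) (u v : List α) :
    align wdel wins wsub (a :: u) (b :: v) ≤ wsub a b + align wdel wins wsub u v := by
  rw [align]; exact (min_le_right _ _).trans (min_le_right _ _)

lemma align_cons_cons_cases (a b : α) (u v : List α) :
    align wdel wins wsub (a :: u) (b :: v) = wdel a + align wdel wins wsub u (b :: v) ∨
    align wdel wins wsub (a :: u) (b :: v) = wins b + align wdel wins wsub (a :: u) v ∨
    align wdel wins wsub (a :: u) (b :: v) = wsub a b + align wdel wins wsub u v := by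
  rw [align]
  rcases min_choice (wdel a + align wdel wins wsub u (b :: v))
    (min (wins b + align wdel wins wsub (a :: u) v) (wsub a b + align wdel wins wsub u v))
    with h | h
  · exact Or.inl h
  · rw [h]
    right
    exact min_choice _ _

lemma align_self_le (hsub0 : ∀ a, wsub a a = 0) (u : List α) :
    align wdel wins wsub u u ≤ 0 := by
  induction u with
  | nil => rw [align]
  | cons a u ih =>
    have h := align_sub_le (wdel := wdel) (wins := wins) (wsub := wsub) a a u u
    linarith [hsub0 a]

lemma Dominates.refl (u : List α) : Dominates wdel wins wsub u u 0 := fun w => by simp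

lemma Dominates.trans {u v w : List α} {c d : ℝ} (h : Dominates wdel wins wsub u v c)
    (h' : Dominates wdel wins wsub v w d) : Dominates wdel wins wsub u w (c + d) :=
  fun z => by linarith [h z, h' z]

lemma Dominates.mono {u v : List α} {c d : ℝ} (h : Dominates wdel wins wsub u v c)
    (hcd : c ≤ d) : Dominates wdel wins wsub u v d :=
  fun z => by linarith [h z]

lemma Dominates.cons {u v : List α} {c : ℝ} (h : Dominates wdel wins wsub u v c) (x : α) :
    Dominates wdel wins wsub (x :: u) (x :: v) c := by
  intro w
  induction w with
  | nil =>
    have := h []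
    rw [align, align]; linarith
  | cons y w ih =>
    rcases align_cons_cons_cases (wdel := wdel) (wins := wins) (wsub := wsub) x y v w
      with e | e | e
    · linarith [align_del_le (wdel := wdel) (wins := wins) (wsub := wsub) x u (y :: w), h (y :: w)]
    · linarith [align_ins_le (wdel := wdel) (wins := wins) (wsub := wsub) y (x :: u) w]
    · linarith [align_sub_le (wdel := wdel) (wins := wins) (wsub := wsub) x y u w, h w]

lemma Dominates.append_left {u v : List α} {c : ℝ} (h : Dominates wdel wins wsub u v c)
    (z : List α) : Dominates wdel wins wsub (z ++ u) (z ++ v) c := by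
  induction z with
  | nil => exact h
  | cons x z ih => exact ih.cons x

lemma dominates_del (a : α) (u : List α) : Dominates wdel wins wsub (a :: u) u (wdel a) :=
  fun w => align_del_le a u w

lemma dominates_ins (hdel : ∀ a, 0 < wdel a) (hins : ∀ a, 0 < wins a)
    (htri₃ : ∀ a b, wins b ≤ wins a + wsub a b) (a : α) (u : List α) :
    Dominates wdel wins wsub u (a :: u) (wins a) := by
  intro w
  induction w with
  | nil => rw [align]; linarith [hdel a, hins a]
  | cons y w ih =>
    have hy := align_ins_le (wdel := wdel) (wins := wins) (wsub := wsub) y u w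
    rcases align_cons_cons_cases (wdel := wdel) (wins := wins) (wsub := wsub) a y u w
      with e | e | e
    · linarith [hdel a, hins a]
    · linarith
    · linarith [htri₃ a y]

lemma dominates_sub (htri₁ : ∀ a b c, wsub a c ≤ wsub a b + wsub b c)
    (htri₄ : ∀ a b, wdel a ≤ wsub a b + wdel b) (a b : α) (u : List α) :
    Dominates wdel wins wsub (a :: u) (b :: u) (wsub a b) := by
  intro w
  induction w with
  | nil => rw [align, align]; linarith [htri₄ a b]
  | cons y w ih =>
    rcases align_cons_cons_cases (wdel := wdel) (wins := wins) (wsub := wsub) b y u w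
      with e | e | e
    · linarith [align_del_le (wdel := wdel) (wins := wins) (wsub := wsub) a u (y :: w), htri₄ a b]
    · linarith [align_ins_le (wdel := wdel) (wins := wins) (wsub := wsub) y (a :: u) w]
    · linarith [align_sub_le (wdel := wdel) (wins := wins) (wsub := wsub) a y u w, htri₁ a b y]

lemma dominates_del_replicate (a : α) (k : ℕ) (u : List α) :
    Dominates wdel wins wsub (List.replicate k a ++ u) u (k * wdel a) := by
  induction k with
  | zero => simpa using Dominates.refl u
  | succ k ih =>
    rw [List.replicate_succ, List.cons_append]
    exact ((dominates_del a _).trans ih).mono (by push_cast; linarith)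

lemma dominates_ins_replicate (hdel : ∀ a, 0 < wdel a) (hins : ∀ a, 0 < wins a)
    (htri₃ : ∀ a b, wins b ≤ wins a + wsub a b) (a : α) (k : ℕ) (u : List α) :
    Dominates wdel wins wsub u (List.replicate k a ++ u) (k * wins a) := by
  induction k with
  | zero => simpa using Dominates.refl u
  | succ k ih =>
    rw [List.replicate_succ, List.cons_append]
    exact (ih.trans (dominates_ins hdel hins htri₃ a _)).mono (by push_cast; linarith)

lemma dominates_sub_replicate (htri₁ : ∀ a b c, wsub a c ≤ wsub a b + wsub b c)
    (htri₄ : ∀ a b, wdel a ≤ wsub a b + wdel b) (a b : α) (k : ℕ) (u : List α) :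
    Dominates wdel wins wsub (List.replicate k a ++ u) (List.replicate k b ++ u)
      (k * wsub a b) := by
  induction k with
  | zero => simpa using Dominates.refl u
  | succ k ih =>
    rw [List.replicate_succ, List.cons_append, List.replicate_succ, List.cons_append]
    exact ((dominates_sub htri₁ htri₄ a b _).trans (ih.cons b)).mono (by push_cast; linarith)

end Align

/-! ### Repeating every letter -/

/-- The word in which every letter of `u` is repeated `N` times. -/
def rep (N : ℕ) (u : List α) : List α := u.flatMap fun a => List.replicate N a

/-- The potential at the point of the refined grid where `r` copies of `a` followed by `rep N u`
remain on one side and `s` copies of `b` followed by `rep N v` on the other: `N` times the linear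
interpolation of the corner values of `align` over the triangle containing that point. -/
noncomputable def interp (wdel wins : α → ℝ) (wsub : α → α → ℝ) (N : ℕ)
    (a : α) (u : List α) (b : α) (v : List α) (r s : ℕ) : ℝ :=
  if s ≤ r then
    s * align wdel wins wsub (a :: u) (b :: v) + ((r : ℝ) - s) * align wdel wins wsub (a :: u) v
      + ((N : ℝ) - r) * align wdel wins wsub u v
  else
    r * align wdel wins wsub (a :: u) (b :: v) + ((s : ℝ) - r) * align wdel wins wsub u (b :: v)
      + ((N : ℝ) - s) * align wdel wins wsub u v

section Rep

variable {wdel wins : α → ℝ} {wsub : α → α → ℝ}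

lemma align_replicate_nil (a : α) (k : ℕ) (u : List α) :
    align wdel wins wsub (List.replicate k a ++ u) [] =
      k * wdel a + align wdel wins wsub u [] := by
  induction k with
  | zero => simp
  | succ k ih => rw [List.replicate_succ, List.cons_append, align, ih]; push_cast; ring

lemma align_nil_replicate (a : α) (k : ℕ) (u : List α) :
    align wdel wins wsub [] (List.replicate k a ++ u) =
      k * wins a + align wdel wins wsub [] u := by
  induction k with
  | zero => simp
  | succ k ih => rw [List.replicate_succ, List.cons_append, align, ih]; push_cast; ring

lemma align_rep_nil (N : ℕ) (u : List α) :
    align wdel wins wsub (rep N u) [] = N * align wdel wins wsub u [] := by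
  induction u with
  | nil => simp [rep, align]
  | cons a u ih =>
    have : rep N (a :: u) = List.replicate N a ++ rep N u := rfl
    rw [this, align_replicate_nil, ih, align]; ring

lemma align_nil_rep (N : ℕ) (u : List α) :
    align wdel wins wsub [] (rep N u) = N * align wdel wins wsub [] u := by
  induction u with
  | nil => simp [rep, align]
  | cons a u ih =>
    have : rep N (a :: u) = List.replicate N a ++ rep N u := rfl
    rw [this, align_nil_replicate, ih, align]; ring

/-- Feasibility of the potential inside one cell, given that it is feasible on the two sides of
the cell at which `a`, respectively `b`, is used up. -/
lemma interp_le (N : ℕ) (a : α) (u : List α) (b : α) (v : List α)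
    (h0 : ∀ s ≤ N, interp wdel wins wsub N a u b v 0 s ≤
      align wdel wins wsub (rep N u) (List.replicate s b ++ rep N v))
    (h1 : ∀ r ≤ N, interp wdel wins wsub N a u b v r 0 ≤
      align wdel wins wsub (List.replicate r a ++ rep N u) (rep N v)) :
    ∀ r ≤ N, ∀ s ≤ N, interp wdel wins wsub N a u b v r s ≤
      align wdel wins wsub (List.replicate r a ++ rep N u) (List.replicate s b ++ rep N v) := by
  intro r
  induction r with
  | zero => intro _ s hs; simpa using h0 s hs
  | succ r ihr =>
    intro hr s
    induction s with
    | zero => intro _; simpa using h1 (r + 1) hr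
    | succ s ihs =>
      intro hs
      have e1 := ihr (by omega) (s + 1) hs
      have e2 := ihs (by omega)
      have e3 := ihr (by omega) s (by omega)
      have d1 := align_del_le (wdel := wdel) (wins := wins) (wsub := wsub) a u (b :: v)
      have d2 := align_del_le (wdel := wdel) (wins := wins) (wsub := wsub) a u v
      have i1 := align_ins_le (wdel := wdel) (wins := wins) (wsub := wsub) b (a :: u) v
      have i2 := align_ins_le (wdel := wdel) (wins := wins) (wsub := wsub) b u v
      have m1 := align_sub_le (wdel := wdel) (wins := wins) (wsub := wsub) a b u v
      have c1 : interp wdel wins wsub N a u b v (r + 1) (s + 1) ≤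
          wdel a + interp wdel wins wsub N a u b v r (s + 1) := by
        unfold interp
        rcases lt_trichotomy r s with h | h | h
        · rw [if_neg (by omega), if_neg (by omega)]; push_cast; linarith
        · subst h
          rw [if_pos (by omega), if_neg (by omega)]; push_cast; linarith
        · rw [if_pos (by omega), if_pos (by omega)]; push_cast; linarith
      have c2 : interp wdel wins wsub N a u b v (r + 1) (s + 1) ≤
          wins b + interp wdel wins wsub N a u b v (r + 1) s := by
        unfold interp
        rcases lt_trichotomy r s with h | h | h
        · rcases Nat.lt_or_ge (r + 1) s with h' | h'
          · rw [if_neg (by omega), if_neg (by omega)]; push_cast; linarith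
          · obtain rfl : s = r + 1 := by omega
            rw [if_neg (by omega), if_pos (by omega)]; push_cast; linarith
        · subst h
          rw [if_pos (by omega), if_pos (by omega)]; push_cast; linarith
        · rw [if_pos (by omega), if_pos (by omega)]; push_cast; linarith
      have c3 : interp wdel wins wsub N a u b v (r + 1) (s + 1) ≤
          wsub a b + interp wdel wins wsub N a u b v r s := by
        unfold interp
        by_cases h : s ≤ r
        · rw [if_pos (by omega), if_pos h]; push_cast; linarith
        · rw [if_neg (by omega), if_neg h]; push_cast; linarith
      rw [List.replicate_succ, List.replicate_succ, List.cons_append, List.cons_append] at *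
      rcases align_cons_cons_cases (wdel := wdel) (wins := wins) (wsub := wsub) a b
        (List.replicate r a ++ rep N u) (List.replicate s b ++ rep N v) with e | e | e
      · linarith
      · linarith
      · linarith

/-- Repeating every letter `N` times multiplies the alignment cost by at least `N`. -/
lemma le_align_rep (N : ℕ) (u v : List α) :
    N * align wdel wins wsub u v ≤ align wdel wins wsub (rep N u) (rep N v) := by
  -- Along the sides of a cell the claim needed by `interp_le` is the one about the adjacent cell,
  -- so the induction carries the statement for partially consumed runs.
  have key : ∀ u : List α,
      (∀ v b, ∀ s ≤ N, s * align wdel wins wsub u (b :: v) +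
        ((N : ℝ) - s) * align wdel wins wsub u v ≤
        align wdel wins wsub (rep N u) (List.replicate s b ++ rep N v)) ∧
      (∀ v a, ∀ r ≤ N, r * align wdel wins wsub (a :: u) v +
        ((N : ℝ) - r) * align wdel wins wsub u v ≤
        align wdel wins wsub (List.replicate r a ++ rep N u) (rep N v)) := by
    intro u
    induction u with
    | nil =>
      have A : ∀ (v : List α) (b : α), ∀ s ≤ N, s * align wdel wins wsub [] (b :: v) +
          ((N : ℝ) - s) * align wdel wins wsub [] v ≤
          align wdel wins wsub (rep N []) (List.replicate s b ++ rep N v) := by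
        intro v b s hs
        change _ ≤ align wdel wins wsub [] _
        rw [align_nil_replicate, align_nil_rep, align]
        apply le_of_eq; ring
      refine ⟨A, ?_⟩
      intro v a
      induction v with
      | nil =>
        intro r hr
        change _ ≤ align wdel wins wsub _ []
        rw [align_replicate_nil, align_rep_nil, align.eq_3]
        apply le_of_eq; ring
      | cons b v ih =>
        intro r hr
        have := interp_le N a [] b v (fun s hs => by
            have := A v b s hs
            unfold interp; split_ifs with h
            · obtain rfl : s = 0 := by omega
              simpa using this
            · simpa using this)
          (fun r hr => by simpa [interp] using ih r hr) r hr N le_rfl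
        refine le_trans (le_of_eq ?_) this
        unfold interp
        split_ifs with h
        · obtain rfl : r = N := by omega
          ring
        · ring
    | cons a' u ihu =>
      obtain ⟨ih1, ih2⟩ := ihu
      have A : ∀ (v : List α) (b : α), ∀ s ≤ N, s * align wdel wins wsub (a' :: u) (b :: v) +
          ((N : ℝ) - s) * align wdel wins wsub (a' :: u) v ≤
          align wdel wins wsub (rep N (a' :: u)) (List.replicate s b ++ rep N v) := by
        intro v b s hs
        have := interp_le N a' u b v (fun s hs => by
            have := ih1 v b s hs
            unfold interp; split_ifs with h
            · obtain rfl : s = 0 := by omega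
              simpa using this
            · simpa using this)
          (fun r hr => by simpa [interp] using ih2 v a' r hr) N le_rfl s hs
        refine le_trans (le_of_eq ?_) this
        unfold interp
        rw [if_pos hs]; ring
      refine ⟨A, ?_⟩
      intro v a
      induction v with
      | nil =>
        intro r hr
        change _ ≤ align wdel wins wsub _ []
        rw [align_replicate_nil, align_rep_nil, align.eq_3]
        apply le_of_eq; ring
      | cons b v ih =>
        intro r hr
        have := interp_le N a (a' :: u) b v (fun s hs => by
            have := A v b s hs
            unfold interp; split_ifs with h
            · obtain rfl : s = 0 := by omega
              simpa using this
            · simpa using this)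
          (fun r hr => by simpa [interp] using ih r hr) r hr N le_rfl
        refine le_trans (le_of_eq ?_) this
        unfold interp
        split_ifs with h
        · obtain rfl : r = N := by omega
          ring
        · ring
  cases v with
  | nil =>
    change _ ≤ align wdel wins wsub _ []
    rw [align_rep_nil]
  | cons b v =>
    have := (key u).1 v b N le_rfl
    simpa [rep] using this

end Rep

/-! ### Concatenation of exponent-strings -/

section Cat

variable [DecidableEq α]

lemma rcat_nil_left (q : List (α × ℝ)) : rcat [] q = q := by simp [rcat, eCat]

lemma rcat_nil_right (p : List (α × ℝ)) : rcat p [] = p := by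
  unfold rcat eCat
  split <;> simp_all

lemma rcat_singleton_cons (a b : α) (s t : ℝ) (q : List (α × ℝ)) :
    rcat [(a, s)] ((b, t) :: q) = if a = b then (a, s + t) :: q else (a, s) :: (b, t) :: q := by
  simp [rcat, eCat]

lemma rcat_cons_cons (x y : α × ℝ) (p q : List (α × ℝ)) :
    rcat (x :: y :: p) q = x :: rcat (y :: p) q := by
  unfold rcat eCat
  rw [List.getLast?_cons_cons]
  split
  · split_ifs <;> simp
  · simp

lemma rcat_singleton_assoc (x : α × ℝ) (p q : List (α × ℝ)) :
    rcat [x] (rcat p q) = rcat (rcat [x] p) q := by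
  obtain ⟨a, s⟩ := x
  rcases p with _ | ⟨⟨b, t⟩, _ | ⟨y, p⟩⟩
  · rw [rcat_nil_left, rcat_nil_right]
  · rcases q with _ | ⟨⟨c, r⟩, q⟩
    · simp [rcat_nil_right]
    · rw [rcat_singleton_cons, rcat_singleton_cons]
      by_cases h1 : a = b <;> by_cases h2 : b = c
      · subst h1; subst h2; simp [rcat_singleton_cons, add_assoc]
      · subst h1; simp [rcat_singleton_cons, h2]
      · subst h2; simp [rcat_singleton_cons, h1, rcat_cons_cons]
      · simp [rcat_singleton_cons, h1, h2, rcat_cons_cons]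
  · rw [rcat_cons_cons, rcat_singleton_cons, rcat_singleton_cons]
    split_ifs
    · rw [rcat_cons_cons]
    · rw [rcat_cons_cons, rcat_cons_cons]

lemma ofWord_cons (a : α) (u : List α) : ofWord (a :: u) = rcat [(a, 1)] (ofWord u) := rfl

lemma ofWord_append (u v : List α) : ofWord (u ++ v) = rcat (ofWord u) (ofWord v) := by
  induction u with
  | nil => exact (rcat_nil_left _).symm
  | cons a u ih => rw [List.cons_append, ofWord_cons, ih, rcat_singleton_assoc, ofWord_cons]

lemma RES.rcat_singleton {a : α} {s : ℝ} {q : List (α × ℝ)} (hs : 0 < s) (hq : RES q) :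
    RES (rcat [(a, s)] q) := by
  obtain ⟨hc, hp⟩ := hq
  unfold IsExp List.Chain' at hc
  rcases q with _ | ⟨⟨b, t⟩, q⟩
  · rw [rcat_nil_right]
    refine ⟨?_, by simpa using hs⟩
    unfold IsExp List.Chain'; simp
  · rw [rcat_singleton_cons]
    have ht : 0 < t := hp (b, t) (by simp)
    split_ifs with h
    · subst h
      refine ⟨?_, ?_⟩
      · unfold IsExp List.Chain'
        rw [List.isChain_cons] at hc ⊢
        exact hc
      · intro x hx
        rcases List.mem_cons.1 hx with rfl | hx
        · exact add_pos hs ht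
        · exact hp x (by simp [hx])
    · refine ⟨?_, ?_⟩
      · unfold IsExp List.Chain'
        rw [List.isChain_cons_cons]
        exact ⟨h, hc⟩
      · intro x hx
        rcases List.mem_cons.1 hx with rfl | hx
        · exact hs
        · exact hp x hx

lemma RES_ofWord (u : List α) : RES (ofWord u) := by
  induction u with
  | nil => exact ⟨by unfold IsExp List.Chain'; simp [ofWord, eRep], by simp [ofWord, eRep]⟩
  | cons a u ih => exact ih.rcat_singleton one_pos

lemma IntExp_ofWord (u : List α) : IntExp (ofWord u) := by
  induction u with
  | nil => simp [ofWord, eRep, IntExp]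
  | cons a u ih =>
    rw [ofWord_cons]
    rcases h : ofWord u with _ | ⟨⟨b, t⟩, q⟩
    · rw [rcat_nil_right]
      intro x hx
      obtain rfl : x = (a, 1) := by simpa using hx
      exact ⟨1, by simp⟩
    · rw [h] at ih
      rw [rcat_singleton_cons]
      split_ifs
      · intro x hx
        rcases List.mem_cons.1 hx with rfl | hx
        · obtain ⟨n, hn⟩ := ih (b, t) (by simp)
          exact ⟨1 + n, by push_cast; simp only at hn ⊢; rw [hn]⟩
        · exact ih x (by simp [hx])
      · intro x hx
        rcases List.mem_cons.1 hx with rfl | hx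
        · exact ⟨1, by simp⟩
        · exact ih x hx

end Cat

/-! ### Words approximating exponent-strings -/

/-- The word in which a run of `a` with exponent `s` is replaced by `⌊N s⌋` letters `a`. -/
noncomputable def blow (N : ℕ) (p : List (α × ℝ)) : List α :=
  p.flatMap fun x => List.replicate ⌊(N : ℝ) * x.2⌋₊ x.1

lemma blow_append (N : ℕ) (p q : List (α × ℝ)) : blow N (p ++ q) = blow N p ++ blow N q := by
  simp [blow]

lemma blow_cons (N : ℕ) (x : α × ℝ) (q : List (α × ℝ)) :
    blow N (x :: q) = List.replicate ⌊(N : ℝ) * x.2⌋₊ x.1 ++ blow N q := rfl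

lemma blow_eq_rep (N : ℕ) {p : List (α × ℝ)} (hp : IntExp p) :
    blow N p = rep N (blow 1 p) := by
  induction p with
  | nil => rfl
  | cons x p ih =>
    obtain ⟨n, hn⟩ := hp x (by simp)
    have hrep : ∀ k : ℕ, rep N (List.replicate k x.1) = List.replicate (N * k) x.1 := by
      intro k
      induction k with
      | zero => rfl
      | succ k ih =>
        change List.replicate N x.1 ++ rep N (List.replicate k x.1) = _
        rw [ih, ← List.replicate_add]; congr 1; ring
    have happ : ∀ u v : List α, rep N (u ++ v) = rep N u ++ rep N v := by
      intro u v; simp [rep]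
    rw [blow_cons, blow_cons, ih (fun y hy => hp y (by simp [hy])), happ, hrep, hn]
    congr 2
    have h1 : ⌊(N : ℝ) * n⌋₊ = N * n := by exact_mod_cast Nat.floor_natCast (R := ℝ) (N * n)
    rw [h1]; simp

lemma ofWord_blow [DecidableEq α] {p : List (α × ℝ)} (h : RES p) (hi : IntExp p) :
    ofWord (blow 1 p) = p := by
  induction p with
  | nil => rfl
  | cons x p ih =>
    obtain ⟨a, s⟩ := x
    obtain ⟨n, hn⟩ := hi (a, s) (by simp)
    have hs : 0 < s := h.2 (a, s) (by simp)
    simp only at hn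
    subst hn
    have hn : 0 < n := by exact_mod_cast hs
    obtain ⟨hc, hp⟩ := h
    unfold IsExp List.Chain' at hc
    rw [List.isChain_cons] at hc
    have ihp := ih ⟨hc.2, fun y hy => hp y (by simp [hy])⟩ (fun y hy => hi y (by simp [hy]))
    have key : ∀ k : ℕ, ofWord (List.replicate (k + 1) a ++ blow 1 p) =
        (a, ((k + 1 : ℕ) : ℝ)) :: p := by
      intro k
      induction k with
      | zero =>
        simp only [zero_add, List.replicate_one, List.singleton_append]
        rw [ofWord_cons, ihp]
        rcases p with _ | ⟨⟨b, t⟩, p⟩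
        · simp [rcat_nil_right]
        · have : a ≠ b := hc.1 (b, t) (by simp)
          simp [rcat_singleton_cons, this]
      | succ k ihk =>
        rw [List.replicate_succ, List.cons_append, ofWord_cons, ihk, rcat_singleton_cons,
          if_pos rfl]
        congr 2; push_cast; ring
    obtain ⟨k, rfl⟩ : ∃ k, n = k + 1 := ⟨n - 1, by omega⟩
    have hfl : ⌊((1 : ℕ) : ℝ) * ((k + 1 : ℕ) : ℝ)⌋₊ = k + 1 := by
      rw [Nat.cast_one, one_mul, Nat.floor_natCast]
    rw [blow_cons, hfl]
    exact key k

section Lower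

variable [DecidableEq α] {wdel wins : α → ℝ} {wsub : α → α → ℝ}

/-- Merging runs changes the approximating word by at most one letter, so concatenation commutes
with approximation up to a cost independent of `N`. -/
lemma exists_dominates_rcat (hdel : ∀ a, 0 < wdel a) (hins : ∀ a, 0 < wins a)
    (htri₃ : ∀ a b, wins b ≤ wins a + wsub a b)
    {p q : List (α × ℝ)} (hp : ∀ x ∈ p, 0 < x.2) (hq : ∀ x ∈ q, 0 < x.2) :
    ∃ K : ℝ, ∀ N : ℕ,
      Dominates wdel wins wsub (blow N (rcat p q)) (blow N p ++ blow N q) K ∧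
      Dominates wdel wins wsub (blow N p ++ blow N q) (blow N (rcat p q)) K := by
  induction p with
  | nil =>
    refine ⟨0, fun N => ?_⟩
    rw [rcat_nil_left]
    exact ⟨Dominates.refl _, Dominates.refl _⟩
  | cons x p ih =>
    rcases p with _ | ⟨y, p⟩
    · obtain ⟨a, s⟩ := x
      rcases q with _ | ⟨⟨b, t⟩, q⟩
      · refine ⟨0, fun N => ?_⟩
        rw [rcat_nil_right]
        simp only [blow, List.flatMap_nil, List.append_nil]
        exact ⟨Dominates.refl _, Dominates.refl _⟩
      · rw [rcat_singleton_cons]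
        split_ifs with h
        · subst h
          have hs : 0 < s := hp (a, s) (by simp)
          have ht : 0 < t := hq (a, t) (by simp)
          refine ⟨wdel a + wins a, fun N => ?_⟩
          have hNs : 0 ≤ (N : ℝ) * s := by positivity
          have hNt : 0 ≤ (N : ℝ) * t := by positivity
          have lo : ⌊(N : ℝ) * s⌋₊ + ⌊(N : ℝ) * t⌋₊ ≤ ⌊(N : ℝ) * (s + t)⌋₊ := by
            apply Nat.le_floor
            push_cast
            linarith [Nat.floor_le hNs, Nat.floor_le hNt]
          have hi : ⌊(N : ℝ) * (s + t)⌋₊ < ⌊(N : ℝ) * s⌋₊ + ⌊(N : ℝ) * t⌋₊ + 2 := by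
            rw [Nat.floor_lt (by positivity)]
            push_cast
            linarith [Nat.lt_floor_add_one ((N : ℝ) * s), Nat.lt_floor_add_one ((N : ℝ) * t)]
          have e : blow N [(a, s)] ++ blow N ((a, t) :: q) =
              List.replicate (⌊(N : ℝ) * s⌋₊ + ⌊(N : ℝ) * t⌋₊) a ++ blow N q := by
            simp [blow, ← List.replicate_append_replicate]
          rw [e, blow_cons]
          dsimp only
          have hd := hdel a
          have hi' := hins a
          obtain h | h : ⌊(N : ℝ) * (s + t)⌋₊ = ⌊(N : ℝ) * s⌋₊ + ⌊(N : ℝ) * t⌋₊ ∨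
            ⌊(N : ℝ) * (s + t)⌋₊ = ⌊(N : ℝ) * s⌋₊ + ⌊(N : ℝ) * t⌋₊ + 1 := by omega
          · rw [h]
            exact ⟨(Dominates.refl _).mono (by linarith), (Dominates.refl _).mono (by linarith)⟩
          · rw [h, List.replicate_succ, List.cons_append]
            exact ⟨(dominates_del a _).mono (by linarith),
              (dominates_ins hdel hins htri₃ a _).mono (by linarith)⟩
        · refine ⟨0, fun N => ?_⟩
          simp only [blow, List.flatMap_cons, List.flatMap_nil, List.append_nil]
          exact ⟨Dominates.refl _, Dominates.refl _⟩
    · obtain ⟨K, hK⟩ := ih (fun z hz => hp z (by simp [hz]))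
      refine ⟨K, fun N => ?_⟩
      rw [rcat_cons_cons, blow_cons, blow_cons N x (y :: p), List.append_assoc]
      exact ⟨(hK N).1.append_left _, (hK N).2.append_left _⟩

/-- Up to a cost independent of `N`, the approximating word of `p₁ a^q p₂` may be assembled from
those of its three factors. -/
lemma exists_dominates_rcat₃ (hdel : ∀ a, 0 < wdel a) (hins : ∀ a, 0 < wins a)
    (htri₃ : ∀ a b, wins b ≤ wins a + wsub a b)
    {p₁ p₂ : List (α × ℝ)} (h₁ : RES p₁) (h₂ : RES p₂) (a : α) {q : ℝ} (hq : 0 < q) :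
    ∃ K : ℝ, ∀ N : ℕ,
      Dominates wdel wins wsub (blow N (rcat p₁ (rcat [(a, q)] p₂)))
        (blow N p₁ ++ (List.replicate ⌊(N : ℝ) * q⌋₊ a ++ blow N p₂)) K ∧
      Dominates wdel wins wsub (blow N p₁ ++ (List.replicate ⌊(N : ℝ) * q⌋₊ a ++ blow N p₂))
        (blow N (rcat p₁ (rcat [(a, q)] p₂))) K := by
  obtain ⟨K₁, hK₁⟩ := exists_dominates_rcat (wsub := wsub) hdel hins htri₃ h₁.2
    (h₂.rcat_singleton (a := a) hq).2
  obtain ⟨K₂, hK₂⟩ := exists_dominates_rcat (wsub := wsub) hdel hins htri₃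
    (p := [(a, q)]) (q := p₂) (by simpa using hq) h₂.2
  refine ⟨K₁ + K₂, fun N => ?_⟩
  have e : blow N [(a, q)] = List.replicate ⌊(N : ℝ) * q⌋₊ a := by simp [blow]
  have h := hK₂ N
  rw [e] at h
  exact ⟨(hK₁ N).1.trans (h.1.append_left _),
    ((h.2.append_left _).trans (hK₁ N).2).mono (by linarith)⟩

lemma Step.dominates (hdel : ∀ a, 0 < wdel a) (hins : ∀ a, 0 < wins a)
    (hsub : ∀ a b, 0 ≤ wsub a b)
    (htri₁ : ∀ a b c, wsub a c ≤ wsub a b + wsub b c)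
    (htri₃ : ∀ a b, wins b ≤ wins a + wsub a b)
    (htri₄ : ∀ a b, wdel a ≤ wsub a b + wdel b)
    {u v : List (α × ℝ)} {c : ℝ} (h : Step wdel wins wsub u v c) :
    ∃ K : ℝ, ∀ N : ℕ, Dominates wdel wins wsub (blow N u) (blow N v) (N * c + K) := by
  obtain ⟨p₁, p₂, h₁, h₂, h⟩ := h
  have hfl : ∀ (N : ℕ) (q w : ℝ), 0 < q → 0 ≤ w → ⌊(N : ℝ) * q⌋₊ * w ≤ N * (q * w) := by
    intro N q w hq hw
    rw [← mul_assoc]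
    exact mul_le_mul_of_nonneg_right (Nat.floor_le (by positivity)) hw
  obtain ⟨K₀, hK₀⟩ := exists_dominates_rcat (wsub := wsub) hdel hins htri₃ h₁.2 h₂.2
  rcases h with ⟨a, q, hq, rfl, rfl, rfl⟩ | ⟨a, q, hq, rfl, rfl, rfl⟩ |
    ⟨a, b, q, hq, rfl, rfl, rfl⟩
  · obtain ⟨K, hK⟩ := exists_dominates_rcat₃ (wsub := wsub) hdel hins htri₃ h₁ h₂ a hq
    refine ⟨K₀ + K, fun N => ?_⟩
    refine (((hK₀ N).1.trans ((dominates_ins_replicate hdel hins htri₃ a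
      ⌊(N : ℝ) * q⌋₊ _).append_left _)).trans (hK N).2).mono ?_
    linarith [hfl N q _ hq (hins a).le]
  · obtain ⟨K, hK⟩ := exists_dominates_rcat₃ (wsub := wsub) hdel hins htri₃ h₁ h₂ a hq
    refine ⟨K₀ + K, fun N => ?_⟩
    refine (((hK N).1.trans ((dominates_del_replicate a
      ⌊(N : ℝ) * q⌋₊ _).append_left _)).trans (hK₀ N).2).mono ?_
    linarith [hfl N q _ hq (hdel a).le]
  · obtain ⟨K, hK⟩ := exists_dominates_rcat₃ (wsub := wsub) hdel hins htri₃ h₁ h₂ a hq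
    obtain ⟨K', hK'⟩ := exists_dominates_rcat₃ (wsub := wsub) hdel hins htri₃ h₁ h₂ b hq
    refine ⟨K + K', fun N => ?_⟩
    refine (((hK N).1.trans ((dominates_sub_replicate htri₁ htri₄ a b
      ⌊(N : ℝ) * q⌋₊ _).append_left _)).trans (hK' N).2).mono ?_
    linarith [hfl N q _ hq (hsub a b)]

lemma EditCost.dominates (hdel : ∀ a, 0 < wdel a) (hins : ∀ a, 0 < wins a)
    (hsub : ∀ a b, 0 ≤ wsub a b)
    (htri₁ : ∀ a b c, wsub a c ≤ wsub a b + wsub b c)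
    (htri₃ : ∀ a b, wins b ≤ wins a + wsub a b)
    (htri₄ : ∀ a b, wdel a ≤ wsub a b + wdel b)
    {u v : List (α × ℝ)} {c : ℝ} (h : EditCost wdel wins wsub u v c) :
    ∃ K : ℝ, ∀ N : ℕ, Dominates wdel wins wsub (blow N u) (blow N v) (N * c + K) := by
  induction h with
  | refl => exact ⟨0, fun N => (Dominates.refl _).mono (by simp)⟩
  | step _ hs ih =>
    obtain ⟨K, hK⟩ := ih
    obtain ⟨K', hK'⟩ := hs.dominates hdel hins hsub htri₁ htri₃ htri₄
    exact ⟨K + K', fun N => ((hK N).trans (hK' N)).mono (by linarith)⟩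

/-- No exp-edit sequence between integer exponent-strings, whatever its intermediate exponents, is
cheaper than an optimal alignment of the corresponding words. -/
lemma EditCost.align_le (hdel : ∀ a, 0 < wdel a) (hins : ∀ a, 0 < wins a)
    (hsub0 : ∀ a, wsub a a = 0) (hsub : ∀ a b, 0 ≤ wsub a b)
    (htri₁ : ∀ a b c, wsub a c ≤ wsub a b + wsub b c)
    (htri₃ : ∀ a b, wins b ≤ wins a + wsub a b)
    (htri₄ : ∀ a b, wdel a ≤ wsub a b + wdel b)
    {p q : List (α × ℝ)} (hp : IntExp p) (hq : IntExp q) {c : ℝ}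
    (h : EditCost wdel wins wsub p q c) :
    align wdel wins wsub (blow 1 p) (blow 1 q) ≤ c := by
  obtain ⟨K, hK⟩ := h.dominates hdel hins hsub htri₁ htri₃ htri₄
  by_contra! hlt
  obtain ⟨N, hN⟩ := exists_nat_gt (K / (align wdel wins wsub (blow 1 p) (blow 1 q) - c))
  rw [div_lt_iff₀ (by linarith)] at hN
  have h1 := le_align_rep (wdel := wdel) (wins := wins) (wsub := wsub) N (blow 1 p) (blow 1 q)
  have h2 := hK N (blow N q)
  have h3 := align_self_le (wdel := wdel) (wins := wins) hsub0 (blow N q)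
  rw [← blow_eq_rep N hp, ← blow_eq_rep N hq] at h1
  linarith

end Lower

/-! ### Realizing an optimal alignment -/

section Upper

variable {wdel wins : α → ℝ} {wsub : α → α → ℝ}

lemma SStep.cons {u v : List α} {c : ℝ} (h : SStep wdel wins wsub u v c) (x : α) :
    SStep wdel wins wsub (x :: u) (x :: v) c := by
  obtain ⟨p₁, p₂, h⟩ := h
  refine ⟨x :: p₁, p₂, ?_⟩
  rcases h with ⟨a, rfl, rfl, rfl⟩ | ⟨a, rfl, rfl, rfl⟩ | ⟨a, b, rfl, rfl, rfl⟩
  · exact Or.inl ⟨a, rfl, rfl, rfl⟩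
  · exact Or.inr (Or.inl ⟨a, rfl, rfl, rfl⟩)
  · exact Or.inr (Or.inr ⟨a, b, rfl, rfl, rfl⟩)

lemma SEditCost.cons {u v : List α} {c : ℝ} (h : SEditCost wdel wins wsub u v c) (x : α) :
    SEditCost wdel wins wsub (x :: u) (x :: v) c := by
  induction h with
  | refl => exact .refl
  | step _ hs ih => exact ih.step (hs.cons x)

lemma SEditCost.head {u v w : List α} {c d : ℝ} (h : SStep wdel wins wsub u v c)
    (h' : SEditCost wdel wins wsub v w d) : SEditCost wdel wins wsub u w (c + d) := by
  induction h' with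
  | refl => simpa [add_comm] using SEditCost.step .refl h
  | step _ hs ih => rw [← add_assoc]; exact ih.step hs

lemma sEditCost_align (u v : List α) :
    SEditCost wdel wins wsub u v (align wdel wins wsub u v) := by
  have hd : ∀ (a : α) (u : List α), SStep wdel wins wsub (a :: u) u (wdel a) :=
    fun a u => ⟨[], u, Or.inr (Or.inl ⟨a, rfl, rfl, rfl⟩)⟩
  have hi : ∀ (a : α) (u : List α), SStep wdel wins wsub u (a :: u) (wins a) :=
    fun a u => ⟨[], u, Or.inl ⟨a, rfl, rfl, rfl⟩⟩
  have hs : ∀ (a b : α) (u : List α), SStep wdel wins wsub (a :: u) (b :: u) (wsub a b) :=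
    fun a b u => ⟨[], u, Or.inr (Or.inr ⟨a, b, rfl, rfl, rfl⟩)⟩
  induction u generalizing v with
  | nil =>
    induction v with
    | nil => rw [align]; exact .refl
    | cons b v ih => rw [align]; exact .head (hi b []) (ih.cons b)
  | cons a u ihu =>
    induction v with
    | nil => rw [align]; exact .head (hd a u) (ihu [])
    | cons b v ihv =>
      rcases align_cons_cons_cases (wdel := wdel) (wins := wins) (wsub := wsub) a b u v
        with e | e | e
      · rw [e]; exact .head (hd a u) (ihu _)
      · rw [e]; exact .head (hi b _) (ihv.cons b)
      · rw [e]; exact .head (hs a b u) ((ihu v).cons b)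

variable [DecidableEq α]

/-- A classical edit step is an exp-edit step with exponent `q = 1`. -/
lemma step_ofWord {u v : List α} {c : ℝ} (h : SStep wdel wins wsub u v c) :
    Step wdel wins wsub (ofWord u) (ofWord v) c := by
  obtain ⟨p₁, p₂, h⟩ := h
  refine ⟨ofWord p₁, ofWord p₂, RES_ofWord _, RES_ofWord _, ?_⟩
  rcases h with ⟨a, rfl, rfl, rfl⟩ | ⟨a, rfl, rfl, rfl⟩ | ⟨a, b, rfl, rfl, rfl⟩
  · exact Or.inl ⟨a, 1, one_pos, by rw [ofWord_append], by rw [ofWord_append, ofWord_cons],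
      (one_mul _).symm⟩
  · exact Or.inr (Or.inl ⟨a, 1, one_pos, by rw [ofWord_append, ofWord_cons],
      by rw [ofWord_append], (one_mul _).symm⟩)
  · exact Or.inr (Or.inr ⟨a, b, 1, one_pos, by rw [ofWord_append, ofWord_cons],
      by rw [ofWord_append, ofWord_cons], (one_mul _).symm⟩)

lemma SEditCost.editCostIn {u v : List α} {c : ℝ} (h : SEditCost wdel wins wsub u v c) :
    EditCostIn IntExp wdel wins wsub (ofWord u) (ofWord v) c := by
  induction h with
  | refl => exact .refl
  | step _ hs ih => exact ih.step (step_ofWord hs) (IntExp_ofWord _)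

lemma EditCostIn.editCost {P : List (α × ℝ) → Prop} {u v : List (α × ℝ)} {c : ℝ}
    (h : EditCostIn P wdel wins wsub u v c) : EditCost wdel wins wsub u v c := by
  induction h with
  | refl => exact .refl
  | step _ hs _ ih => exact ih.step hs

end Upper

end ExpStr

open ExpStr in
/-- For `ℕ`-exponent-strings `p₁, p₂` there is a minimum-cost exp-edit
sequence from `p₁` to `p₂` all of whose intermediate terms are
`ℕ`-exponent-strings, of total cost `dist(p₁, p₂)`. -/
theorem min_seq_int {α : Type*} [DecidableEq α]
    (wdel wins : α → ℝ) (wsub : α → α → ℝ)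
    (hdel : ∀ a, 0 < wdel a) (hins : ∀ a, 0 < wins a)
    (hsub0 : ∀ a, wsub a a = 0) (hsubpos : ∀ a b, a ≠ b → 0 < wsub a b)
    (htri₁ : ∀ a b c, wsub a c ≤ wsub a b + wsub b c)
    (htri₂ : ∀ a b, wsub a b ≤ wdel a + wins b)
    (htri₃ : ∀ a b, wins b ≤ wins a + wsub a b)
    (htri₄ : ∀ a b, wdel a ≤ wsub a b + wdel b)
    (p₁ p₂ : List (α × ℝ)) (h₁ : RES p₁) (h₂ : RES p₂)
    (hi₁ : IntExp p₁) (hi₂ : IntExp p₂) :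
    EditCostIn IntExp wdel wins wsub p₁ p₂ (eDist wdel wins wsub p₁ p₂) := by
  have hsub : ∀ a b, 0 ≤ wsub a b := by
    intro a b
    by_cases h : a = b
    · rw [h, hsub0]
    · exact (hsubpos a b h).le
  have hseq := (sEditCost_align (wdel := wdel) (wins := wins) (wsub := wsub)
    (blow 1 p₁) (blow 1 p₂)).editCostIn
  rw [ofWord_blow h₁ hi₁, ofWord_blow h₂ hi₂] at hseq
  have hleast : IsLeast {c | EditCost wdel wins wsub p₁ p₂ c}
      (align wdel wins wsub (blow 1 p₁) (blow 1 p₂)) :=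
    ⟨hseq.editCost, fun c hc => hc.align_le hdel hins hsub0 hsub htri₁ htri₃ htri₄ hi₁ hi₂⟩
  rw [eDist, hleast.csInf_eq]
  exact hseq
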